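/- arXiv:0811.3447 — 10 statements merged into one kernel-verified Lean document; each statement's English description precedes it below -/
import Mathlib

section
/- Let s₁, s₂ ∈ ℝ. Suppose (u₁,v₁), (u₂,v₂), (u₃,v₃) are three pairwise distinct points of ℝ² each satisfying u_i = s₁ and u_i v_i + v_i³ = s₂, and suppose D_i := u_i + 3v_i² ≠ 0 for each i. Then 1/D₁ + 1/D₂ + 1/D₃ = 0; that is, the signed magnifications of the three images of a source in the three-image region of the generic cusp map sum to zero. -/
/-- Cusp magnification relation: the signed magnifications of the three images of a
source in the three-image region of the generic cusp map `f(u,v) = (u, uv + v³)`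
sum to zero. -/
theorem cusp_generic_magnification_relation
    (s₁ s₂ u₁ v₁ u₂ v₂ u₃ v₃ : ℝ)
    (h12 : (u₁, v₁) ≠ (u₂, v₂)) (h13 : (u₁, v₁) ≠ (u₃, v₃)) (h23 : (u₂, v₂) ≠ (u₃, v₃))
    (h₁a : u₁ = s₁) (h₁b : u₁ * v₁ + v₁ ^ 3 = s₂)
    (h₂a : u₂ = s₁) (h₂b : u₂ * v₂ + v₂ ^ 3 = s₂)
    (h₃a : u₃ = s₁) (h₃b : u₃ * v₃ + v₃ ^ 3 = s₂)
    (hD₁ : u₁ + 3 * v₁ ^ 2 ≠ 0) (hD₂ : u₂ + 3 * v₂ ^ 2 ≠ 0) (hD₃ : u₃ + 3 * v₃ ^ 2 ≠ 0) :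
    1 / (u₁ + 3 * v₁ ^ 2) + 1 / (u₂ + 3 * v₂ ^ 2) + 1 / (u₃ + 3 * v₃ ^ 2) = 0 := by
  subst h₁a
  subst h₂a
  subst h₃a
  have n12 : v₁ - v₂ ≠ 0 := fun h => h12 (by rw [sub_eq_zero.mp h])
  have n13 : v₁ - v₃ ≠ 0 := fun h => h13 (by rw [sub_eq_zero.mp h])
  have n23 : v₂ - v₃ ≠ 0 := fun h => h23 (by rw [sub_eq_zero.mp h])
  have e12 : u₃ + (v₁ ^ 2 + v₁ * v₂ + v₂ ^ 2) = 0 :=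
    mul_left_cancel₀ n12 (by linear_combination h₁b - h₂b)
  have e13 : u₃ + (v₁ ^ 2 + v₁ * v₃ + v₃ ^ 2) = 0 :=
    mul_left_cancel₀ n13 (by linear_combination h₁b - h₃b)
  have e : v₁ + v₂ + v₃ = 0 :=
    mul_left_cancel₀ n23 (by linear_combination e12 - e13)
  have hc : v₃ = -v₁ - v₂ := by linear_combination e
  have d1 : u₃ + 3 * v₁ ^ 2 = (v₁ - v₂) * (v₁ - v₃) := by
    rw [hc]; linear_combination e12
  have d2 : u₃ + 3 * v₂ ^ 2 = -((v₁ - v₂) * (v₂ - v₃)) := by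
    rw [hc]; linear_combination e12
  have d3 : u₃ + 3 * v₃ ^ 2 = (v₁ - v₃) * (v₂ - v₃) := by
    rw [hc]; linear_combination e12
  rw [d1, d2, d3]
  field_simp
  ring
end

section
/- Let a₁₁, a₁₂₂, a₂₂₂₂, s₁, s₂ ∈ ℝ with a₁₁ ≠ 0. Suppose (u₁,v₁), (u₂,v₂), (u₃,v₃) are three pairwise distinct points of ℝ² each satisfying a₁₁u_i + (1/2)a₁₂₂v_i² = s₁ and a₁₂₂u_iv_i + (1/6)a₂₂₂₂v_i³ = s₂, and suppose D_i := a₁₁(a₁₂₂u_i + (1/2)a₂₂₂₂v_i²) − a₁₂₂²v_i² ≠ 0 for each i. Then 1/D₁ + 1/D₂ + 1/D₃ = 0; that is, the signed magnifications of the three lensed images of a source in the three-image region of the quantitative cusp lensing map sum to zero. -/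
/-- Quantitative cusp magnification relation: the signed magnifications of the three
lensed images of a source in the three-image region of the quantitative cusp lensing map
`η(u,v) = (a₁₁u + (1/2)a₁₂₂v², a₁₂₂uv + (1/6)a₂₂₂₂v³)` sum to zero. -/
theorem cusp_quantitative_magnification_relation
    (a₁₁ a₁₂₂ a₂₂₂₂ s₁ s₂ u₁ v₁ u₂ v₂ u₃ v₃ : ℝ)
    (ha : a₁₁ ≠ 0)
    (h12 : (u₁, v₁) ≠ (u₂, v₂)) (h13 : (u₁, v₁) ≠ (u₃, v₃)) (h23 : (u₂, v₂) ≠ (u₃, v₃))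
    (h₁a : a₁₁ * u₁ + (1 / 2) * a₁₂₂ * v₁ ^ 2 = s₁)
    (h₁b : a₁₂₂ * u₁ * v₁ + (1 / 6) * a₂₂₂₂ * v₁ ^ 3 = s₂)
    (h₂a : a₁₁ * u₂ + (1 / 2) * a₁₂₂ * v₂ ^ 2 = s₁)
    (h₂b : a₁₂₂ * u₂ * v₂ + (1 / 6) * a₂₂₂₂ * v₂ ^ 3 = s₂)
    (h₃a : a₁₁ * u₃ + (1 / 2) * a₁₂₂ * v₃ ^ 2 = s₁)
    (h₃b : a₁₂₂ * u₃ * v₃ + (1 / 6) * a₂₂₂₂ * v₃ ^ 3 = s₂)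
    (hD₁ : a₁₁ * (a₁₂₂ * u₁ + (1 / 2) * a₂₂₂₂ * v₁ ^ 2) - a₁₂₂ ^ 2 * v₁ ^ 2 ≠ 0)
    (hD₂ : a₁₁ * (a₁₂₂ * u₂ + (1 / 2) * a₂₂₂₂ * v₂ ^ 2) - a₁₂₂ ^ 2 * v₂ ^ 2 ≠ 0)
    (hD₃ : a₁₁ * (a₁₂₂ * u₃ + (1 / 2) * a₂₂₂₂ * v₃ ^ 2) - a₁₂₂ ^ 2 * v₃ ^ 2 ≠ 0) :
    1 / (a₁₁ * (a₁₂₂ * u₁ + (1 / 2) * a₂₂₂₂ * v₁ ^ 2) - a₁₂₂ ^ 2 * v₁ ^ 2) +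
      1 / (a₁₁ * (a₁₂₂ * u₂ + (1 / 2) * a₂₂₂₂ * v₂ ^ 2) - a₁₂₂ ^ 2 * v₂ ^ 2) +
      1 / (a₁₁ * (a₁₂₂ * u₃ + (1 / 2) * a₂₂₂₂ * v₃ ^ 2) - a₁₂₂ ^ 2 * v₃ ^ 2) = 0 := by
  have key : ∀ u v u' v' : ℝ, a₁₁ * u + (1 / 2) * a₁₂₂ * v ^ 2 = s₁ →
      a₁₁ * u' + (1 / 2) * a₁₂₂ * v' ^ 2 = s₁ → (u, v) ≠ (u', v') → v - v' ≠ 0 := by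
    intro u v u' v' h h' hne hv
    have hv' : v = v' := sub_eq_zero.mp hv
    subst hv'
    apply hne
    have : a₁₁ * u = a₁₁ * u' := by linarith
    rw [mul_left_cancel₀ ha this]
  have n12 := key _ _ _ _ h₁a h₂a h12
  have n13 := key _ _ _ _ h₁a h₃a h13
  have n23 := key _ _ _ _ h₂a h₃a h23
  obtain ⟨k, hk⟩ : ∃ k, k = a₁₁ * a₂₂₂₂ / 6 - a₁₂₂ ^ 2 / 2 := ⟨_, rfl⟩
  obtain ⟨m, hm⟩ : ∃ m, m = a₁₂₂ * s₁ := ⟨_, rfl⟩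
  have c₁ : k * v₁ ^ 3 + m * v₁ = a₁₁ * s₂ := by
    rw [hk, hm, ← h₁a, ← h₁b]; ring
  have c₂ : k * v₂ ^ 3 + m * v₂ = a₁₁ * s₂ := by
    rw [hk, hm, ← h₂a, ← h₂b]; ring
  have c₃ : k * v₃ ^ 3 + m * v₃ = a₁₁ * s₂ := by
    rw [hk, hm, ← h₃a, ← h₃b]; ring
  have d₁ : a₁₁ * (a₁₂₂ * u₁ + (1 / 2) * a₂₂₂₂ * v₁ ^ 2) - a₁₂₂ ^ 2 * v₁ ^ 2
      = 3 * k * v₁ ^ 2 + m := by rw [hk, hm, ← h₁a]; ring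
  have d₂ : a₁₁ * (a₁₂₂ * u₂ + (1 / 2) * a₂₂₂₂ * v₂ ^ 2) - a₁₂₂ ^ 2 * v₂ ^ 2
      = 3 * k * v₂ ^ 2 + m := by rw [hk, hm, ← h₂a]; ring
  have d₃ : a₁₁ * (a₁₂₂ * u₃ + (1 / 2) * a₂₂₂₂ * v₃ ^ 2) - a₁₂₂ ^ 2 * v₃ ^ 2
      = 3 * k * v₃ ^ 2 + m := by rw [hk, hm, ← h₃a]; ring
  have e12 : k * (v₁ ^ 2 + v₁ * v₂ + v₂ ^ 2) + m = 0 := by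
    apply mul_left_cancel₀ n12; linear_combination c₁ - c₂
  have e13 : k * (v₁ ^ 2 + v₁ * v₃ + v₃ ^ 2) + m = 0 := by
    apply mul_left_cancel₀ n13; linear_combination c₁ - c₃
  have e : k * (v₁ + v₂ + v₃) = 0 := by
    apply mul_left_cancel₀ n23; linear_combination e12 - e13
  rw [d₁] at hD₁ ⊢
  have hk0 : k ≠ 0 := by
    intro h0
    apply hD₁
    rw [h0] at e12 ⊢
    linear_combination e12
  have f₁ : 3 * k * v₁ ^ 2 + m = k * (v₁ - v₂) * (v₁ - v₃) := by
    linear_combination e12 + (v₁ - v₂) * e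
  have f₂ : 3 * k * v₂ ^ 2 + m = -(k * (v₁ - v₂) * (v₂ - v₃)) := by
    linear_combination e12 - (v₁ - v₂) * e
  have f₃ : 3 * k * v₃ ^ 2 + m = k * (v₁ - v₃) * (v₂ - v₃) := by
    linear_combination e13 - (v₁ - v₃) * e
  rw [d₂, d₃, f₁, f₂, f₃]
  field_simp
  ring
end

section
/- Let c, s₁, s₂ ∈ ℝ. Suppose (u₁,v₁), (u₂,v₂), (u₃,v₃), (u₄,v₄) are four pairwise distinct points of ℝ² each satisfying u_i² − v_i² = s₁ and −2u_iv_i + 4cv_i = s₂, and suppose D_i := 8cu_i − 4(u_i² + v_i²) ≠ 0 for each i. Then 1/D₁ + 1/D₂ + 1/D₃ + 1/D₄ = 0; that is, the total signed magnification of a source in the four-image region of the elliptic umbilic lensing map is identically zero. -/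
/-- Two distinct reals with equal squares are opposite. -/
lemma opp_of_sq {a b : ℝ} (h : a ^ 2 = b ^ 2) (hab : a ≠ b) : b = -a := by
  have h1 : (a - b) * (a + b) = 0 := by linear_combination h
  rcases mul_eq_zero.mp h1 with h2 | h2
  · exact absurd (sub_eq_zero.mp h2) hab
  · linarith

/-- Three pairwise distinct reals cannot have equal squares. -/
lemma no_three {a b d : ℝ} (h1 : a ^ 2 = b ^ 2) (h2 : a ^ 2 = d ^ 2)
    (hab : a ≠ b) (had : a ≠ d) (hbd : b ≠ d) : False :=
  hbd ((opp_of_sq h1 hab).trans (opp_of_sq h2 had).symm)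

/-- The degenerate case `s₂ = 0`: two images on the axis `v = 0`, two on the line `u = 2c`. -/
lemma two_two (c s a b p q : ℝ) (ha : a ^ 2 = s) (hb : b ^ 2 = s)
    (hp : (2 * c) ^ 2 - p ^ 2 = s) (hq : (2 * c) ^ 2 - q ^ 2 = s)
    (hab : a ≠ b) (hpq : p ≠ q) :
    1 / (8 * c * a - 4 * (a ^ 2 + 0 ^ 2)) + 1 / (8 * c * b - 4 * (b ^ 2 + 0 ^ 2)) +
      1 / (8 * c * (2 * c) - 4 * ((2 * c) ^ 2 + p ^ 2)) +
      1 / (8 * c * (2 * c) - 4 * ((2 * c) ^ 2 + q ^ 2)) = 0 := by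
  obtain rfl := opp_of_sq (ha.trans hb.symm) hab
  obtain rfl := opp_of_sq (show p ^ 2 = q ^ 2 by linarith) hpq
  have a0 : a ≠ 0 := by rintro rfl; simp at hab
  have p0 : p ≠ 0 := by rintro rfl; simp at hpq
  have hpp : (2 * c - a) * (2 * c + a) = p ^ 2 := by linear_combination hp - ha
  have hm : (2 * c - a) * (2 * c + a) ≠ 0 := by rw [hpp]; exact pow_ne_zero 2 p0
  have m1 := left_ne_zero_of_mul hm
  have m2 := right_ne_zero_of_mul hm
  have e1 : 8 * c * a - 4 * (a ^ 2 + 0 ^ 2) = 4 * a * (2 * c - a) := by ring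
  have e2 : 8 * c * -a - 4 * ((-a) ^ 2 + 0 ^ 2) = -(4 * a * (2 * c + a)) := by ring
  have e3 : 8 * c * (2 * c) - 4 * ((2 * c) ^ 2 + p ^ 2) = -(4 * ((2 * c - a) * (2 * c + a))) := by
    rw [hpp]; ring
  have e4 : 8 * c * (2 * c) - 4 * ((2 * c) ^ 2 + (-p) ^ 2)
      = -(4 * ((2 * c - a) * (2 * c + a))) := by
    rw [hpp]; ring
  rw [e1, e2, e3, e4]
  field_simp
  ring

/-- The generic case: `u` determines `v`. -/
lemma u_ne {c s₂ u v u' v' : ℝ} (hs : s₂ ≠ 0) (h : -2 * u * v + 4 * c * v = s₂)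
    (h' : -2 * u' * v' + 4 * c * v' = s₂) (hne : (u, v) ≠ (u', v')) : u - u' ≠ 0 := by
  intro e
  obtain rfl : u = u' := sub_eq_zero.mp e
  have hu : -2 * u + 4 * c ≠ 0 := by
    intro h0
    exact hs (by linear_combination -h + v * h0)
  exact hne (by rw [mul_left_cancel₀ hu (show (-2 * u + 4 * c) * v = (-2 * u + 4 * c) * v' by
    linear_combination h - h')])

/-- First divided difference. -/
lemma quartic {c s₁ s₂ u v : ℝ} (h : u ^ 2 - v ^ 2 = s₁) (h' : -2 * u * v + 4 * c * v = s₂) :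
    4 * (u ^ 2 - s₁) * (u - 2 * c) ^ 2 = s₂ ^ 2 := by
  rw [← h, ← h']; ring

/-- Elliptic umbilic magnification relation: the total signed magnification of a source
in the four-image region of the elliptic umbilic lensing map
`η_c(u,v) = (u² − v², −2uv + 4cv)` is identically zero. -/
theorem elliptic_umbilic_lensing_magnification_relation
    (c s₁ s₂ u₁ v₁ u₂ v₂ u₃ v₃ u₄ v₄ : ℝ)
    (h12 : (u₁, v₁) ≠ (u₂, v₂)) (h13 : (u₁, v₁) ≠ (u₃, v₃)) (h14 : (u₁, v₁) ≠ (u₄, v₄))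
    (h23 : (u₂, v₂) ≠ (u₃, v₃)) (h24 : (u₂, v₂) ≠ (u₄, v₄)) (h34 : (u₃, v₃) ≠ (u₄, v₄))
    (h₁a : u₁ ^ 2 - v₁ ^ 2 = s₁) (h₁b : -2 * u₁ * v₁ + 4 * c * v₁ = s₂)
    (h₂a : u₂ ^ 2 - v₂ ^ 2 = s₁) (h₂b : -2 * u₂ * v₂ + 4 * c * v₂ = s₂)
    (h₃a : u₃ ^ 2 - v₃ ^ 2 = s₁) (h₃b : -2 * u₃ * v₃ + 4 * c * v₃ = s₂)
    (h₄a : u₄ ^ 2 - v₄ ^ 2 = s₁) (h₄b : -2 * u₄ * v₄ + 4 * c * v₄ = s₂)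
    (hD₁ : 8 * c * u₁ - 4 * (u₁ ^ 2 + v₁ ^ 2) ≠ 0)
    (hD₂ : 8 * c * u₂ - 4 * (u₂ ^ 2 + v₂ ^ 2) ≠ 0)
    (hD₃ : 8 * c * u₃ - 4 * (u₃ ^ 2 + v₃ ^ 2) ≠ 0)
    (hD₄ : 8 * c * u₄ - 4 * (u₄ ^ 2 + v₄ ^ 2) ≠ 0) :
    1 / (8 * c * u₁ - 4 * (u₁ ^ 2 + v₁ ^ 2)) + 1 / (8 * c * u₂ - 4 * (u₂ ^ 2 + v₂ ^ 2)) +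
      1 / (8 * c * u₃ - 4 * (u₃ ^ 2 + v₃ ^ 2)) + 1 / (8 * c * u₄ - 4 * (u₄ ^ 2 + v₄ ^ 2)) = 0 := by
  by_cases hs : s₂ = 0
  · have key : ∀ u v : ℝ, -2 * u * v + 4 * c * v = s₂ → v = 0 ∨ u = 2 * c := by
      intro u v h
      have : v * (2 * c - u) = 0 := by linear_combination h / 2 + hs / 2
      rcases mul_eq_zero.mp this with h | h
      · exact Or.inl h
      · exact Or.inr (by linarith)
    rcases key _ _ h₁b with rfl | rfl <;> rcases key _ _ h₂b with rfl | rfl <;>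
      rcases key _ _ h₃b with rfl | rfl <;> rcases key _ _ h₄b with rfl | rfl <;>
      simp only [ne_eq, Prod.mk.injEq, true_and, and_true] at h12 h13 h14 h23 h24 h34 <;>
    first
    | exact (no_three (by linarith) (by linarith) h12 h13 h23).elim
    | exact (no_three (by linarith) (by linarith) h12 h14 h24).elim
    | exact (no_three (by linarith) (by linarith) h13 h14 h34).elim
    | exact (no_three (by linarith) (by linarith) h23 h24 h34).elim
    | linarith [two_two c s₁ u₁ u₂ v₃ v₄ (by linarith) (by linarith) h₃a h₄a h12 h34]
    | linarith [two_two c s₁ u₁ u₃ v₂ v₄ (by linarith) (by linarith) h₂a h₄a h13 h24]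
    | linarith [two_two c s₁ u₁ u₄ v₂ v₃ (by linarith) (by linarith) h₂a h₃a h14 h23]
    | linarith [two_two c s₁ u₂ u₃ v₁ v₄ (by linarith) (by linarith) h₁a h₄a h23 h14]
    | linarith [two_two c s₁ u₂ u₄ v₁ v₃ (by linarith) (by linarith) h₁a h₃a h24 h13]
    | linarith [two_two c s₁ u₃ u₄ v₁ v₂ (by linarith) (by linarith) h₁a h₂a h34 h12]
  · have d12 := u_ne hs h₁b h₂b h12
    have d13 := u_ne hs h₁b h₃b h13
    have d14 := u_ne hs h₁b h₄b h14
    have d23 := u_ne hs h₂b h₃b h23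
    have d24 := u_ne hs h₂b h₄b h24
    have d34 := u_ne hs h₃b h₄b h34
    have q1 := quartic h₁a h₁b
    have q2 := quartic h₂a h₂b
    have q3 := quartic h₃a h₃b
    have q4 := quartic h₄a h₄b
    have dd : ∀ x y : ℝ, x - y ≠ 0 → 4 * (x ^ 2 - s₁) * (x - 2 * c) ^ 2 = s₂ ^ 2 →
        4 * (y ^ 2 - s₁) * (y - 2 * c) ^ 2 = s₂ ^ 2 →
        (x ^ 3 + x ^ 2 * y + x * y ^ 2 + y ^ 3) - 4 * c * (x ^ 2 + x * y + y ^ 2)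
          + (4 * c ^ 2 - s₁) * (x + y) + 4 * c * s₁ = 0 := by
      intro x y hxy hx hy
      apply mul_left_cancel₀ hxy
      linear_combination (hx - hy) / 4
    have t12 := dd _ _ d12 q1 q2
    have t13 := dd _ _ d13 q1 q3
    have t14 := dd _ _ d14 q1 q4
    have ddd : ∀ y z : ℝ, y - z ≠ 0 →
        (u₁ ^ 3 + u₁ ^ 2 * y + u₁ * y ^ 2 + y ^ 3) - 4 * c * (u₁ ^ 2 + u₁ * y + y ^ 2)
          + (4 * c ^ 2 - s₁) * (u₁ + y) + 4 * c * s₁ = 0 →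
        (u₁ ^ 3 + u₁ ^ 2 * z + u₁ * z ^ 2 + z ^ 3) - 4 * c * (u₁ ^ 2 + u₁ * z + z ^ 2)
          + (4 * c ^ 2 - s₁) * (u₁ + z) + 4 * c * s₁ = 0 →
        u₁ ^ 2 + u₁ * (y + z) + y ^ 2 + y * z + z ^ 2 - 4 * c * (u₁ + y + z)
          + (4 * c ^ 2 - s₁) = 0 := by
      intro y z hyz hy hz
      apply mul_left_cancel₀ hyz
      linear_combination hy - hz
    have w3 := ddd _ _ d23 t12 t13
    have w4 := ddd _ _ d24 t12 t14
    have e1 : u₁ + u₂ + u₃ + u₄ = 4 * c := by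
      apply mul_left_cancel₀ d34
      linear_combination w3 - w4
    have lin : ∀ u v a b d : ℝ, u ^ 2 - v ^ 2 = s₁ → -2 * u * v + 4 * c * v = s₂ →
        u - a ≠ 0 → u - b ≠ 0 → u - d ≠ 0 →
        (u - 2 * c) * (8 * c * u - 4 * (u ^ 2 + v ^ 2)) = -2 * ((u - a) * (u - b) * (u - d)) →
        1 / (8 * c * u - 4 * (u ^ 2 + v ^ 2))
          = -(u - 2 * c) / (2 * ((u - a) * (u - b) * (u - d))) := by
      intro u v a b d h h' ha hb hd e
      have hprod : -2 * ((u - a) * (u - b) * (u - d)) ≠ 0 :=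
        mul_ne_zero (by norm_num) (mul_ne_zero (mul_ne_zero ha hb) hd)
      have hD : 8 * c * u - 4 * (u ^ 2 + v ^ 2) ≠ 0 := by
        intro h0; rw [h0, mul_zero] at e; exact hprod e.symm
      rw [div_eq_div_iff hD (mul_ne_zero two_ne_zero (mul_ne_zero (mul_ne_zero ha hb) hd))]
      linear_combination e
    have r1 := lin u₁ v₁ u₂ u₃ u₄ h₁a h₁b
      d12 d13 d14
      (by linear_combination 4 * (u₁ - 2 * c) * h₁a - 2 * t12 - 2 * ((u₁ - u₁) + (u₁ - u₂)) * w3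
            - 2 * ((u₁ - u₁) * (u₁ - u₂) + (u₁ - u₁) * (u₁ - u₃) + (u₁ - u₂) * (u₁ - u₃)) * e1)
    have r2 := lin u₂ v₂ u₁ u₃ u₄ h₂a h₂b
      (sub_ne_zero.mpr (sub_ne_zero.mp d12).symm) d23 d24
      (by linear_combination 4 * (u₂ - 2 * c) * h₂a - 2 * t12 - 2 * ((u₂ - u₁) + (u₂ - u₂)) * w3
            - 2 * ((u₂ - u₁) * (u₂ - u₂) + (u₂ - u₁) * (u₂ - u₃) + (u₂ - u₂) * (u₂ - u₃)) * e1)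
    have r3 := lin u₃ v₃ u₁ u₂ u₄ h₃a h₃b
      (sub_ne_zero.mpr (sub_ne_zero.mp d13).symm) (sub_ne_zero.mpr (sub_ne_zero.mp d23).symm) d34
      (by linear_combination 4 * (u₃ - 2 * c) * h₃a - 2 * t12 - 2 * ((u₃ - u₁) + (u₃ - u₂)) * w3
            - 2 * ((u₃ - u₁) * (u₃ - u₂) + (u₃ - u₁) * (u₃ - u₃) + (u₃ - u₂) * (u₃ - u₃)) * e1)
    have r4 := lin u₄ v₄ u₁ u₂ u₃ h₄a h₄b
      (sub_ne_zero.mpr (sub_ne_zero.mp d14).symm) (sub_ne_zero.mpr (sub_ne_zero.mp d24).symm) (sub_ne_zero.mpr (sub_ne_zero.mp d34).symm)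
      (by linear_combination 4 * (u₄ - 2 * c) * h₄a - 2 * t12 - 2 * ((u₄ - u₁) + (u₄ - u₂)) * w3
            - 2 * ((u₄ - u₁) * (u₄ - u₂) + (u₄ - u₁) * (u₄ - u₃) + (u₄ - u₂) * (u₄ - u₃)) * e1)
    rw [r1, r2, r3, r4]
    have n1 : u₂ - u₁ = -(u₁ - u₂) := by ring
    have n2 : u₃ - u₁ = -(u₁ - u₃) := by ring
    have n3 : u₄ - u₁ = -(u₁ - u₄) := by ring
    have n4 : u₃ - u₂ = -(u₂ - u₃) := by ring
    have n5 : u₄ - u₂ = -(u₂ - u₄) := by ring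
    have n6 : u₄ - u₃ = -(u₃ - u₄) := by ring
    rw [n1, n2, n3, n4, n5, n6]
    field_simp
    ring
end

section
/- Let c, s₁, s₂ ∈ ℝ. Suppose (u₁,v₁), (u₂,v₂), (u₃,v₃), (u₄,v₄) are four pairwise distinct points of ℝ² each satisfying u_i² + 2cv_i = s₁ and v_i² + 2cu_i = s₂, and suppose D_i := 4(u_iv_i − c²) ≠ 0 for each i. Then 1/D₁ + 1/D₂ + 1/D₃ + 1/D₄ = 0; that is, the total signed magnification of a source in the four-image region of the hyperbolic umbilic lensing map is identically zero. -/
/-- Four distinct roots of the quartic for `u`: the derivative at a root, as a product. -/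
lemma key (c s₁ s₂ a b d e va vb vd ve : ℝ) (hab : a ≠ b) (hac : a ≠ d) (had : a ≠ e)
    (hbc : b ≠ d) (hbd : b ≠ e) (hcd : d ≠ e)
    (h₁a : a ^ 2 + 2 * c * va = s₁) (h₁b : va ^ 2 + 2 * c * a = s₂)
    (h₂a : b ^ 2 + 2 * c * vb = s₁) (h₂b : vb ^ 2 + 2 * c * b = s₂)
    (h₃a : d ^ 2 + 2 * c * vd = s₁) (h₃b : vd ^ 2 + 2 * c * d = s₂)
    (h₄a : e ^ 2 + 2 * c * ve = s₁) (h₄b : ve ^ 2 + 2 * c * e = s₂) :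
    -2 * c * (4 * (a * va - c ^ 2)) = (a - b) * (a - d) * (a - e) := by
  have P : ∀ x y : ℝ, x ^ 2 + 2 * c * y = s₁ → y ^ 2 + 2 * c * x = s₂ →
      x ^ 4 - 2 * s₁ * x ^ 2 + 8 * c ^ 3 * x + s₁ ^ 2 - 4 * c ^ 2 * s₂ = 0 := by
    intro x y h k
    subst h
    subst k
    ring
  have pa := P _ _ h₁a h₁b
  have pb := P _ _ h₂a h₂b
  have pd := P _ _ h₃a h₃b
  have pe := P _ _ h₄a h₄b
  have Q : ∀ x : ℝ, a ≠ x →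
      x ^ 4 - 2 * s₁ * x ^ 2 + 8 * c ^ 3 * x + s₁ ^ 2 - 4 * c ^ 2 * s₂ = 0 →
      a ^ 3 + a ^ 2 * x + a * x ^ 2 + x ^ 3 - 2 * s₁ * (a + x) + 8 * c ^ 3 = 0 := by
    intro x hx h
    apply mul_left_cancel₀ (sub_ne_zero.2 hx)
    linear_combination pa - h
  have qb := Q b hab pb
  have qd := Q d hac pd
  have qe := Q e had pe
  have r1 : a ^ 2 + a * (b + d) + b ^ 2 + b * d + d ^ 2 - 2 * s₁ = 0 := by
    apply mul_left_cancel₀ (sub_ne_zero.2 hbc)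
    linear_combination qb - qd
  have r2 : a ^ 2 + a * (b + e) + b ^ 2 + b * e + e ^ 2 - 2 * s₁ = 0 := by
    apply mul_left_cancel₀ (sub_ne_zero.2 hbd)
    linear_combination qb - qe
  have t : a + b + d + e = 0 := by
    apply mul_left_cancel₀ (sub_ne_zero.2 hcd)
    linear_combination r1 - r2
  have he : e = -a - b - d := by linarith
  subst he
  linear_combination (-4 * a) * h₁a + qb + (a - b) * r1

/-- Hyperbolic umbilic magnification relation: the total signed magnification of a source
in the four-image region of the hyperbolic umbilic lensing map
`η_c(u,v) = (u² + 2cv, v² + 2cu)` is identically zero. -/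
theorem hyperbolic_umbilic_lensing_magnification_relation
    (c s₁ s₂ u₁ v₁ u₂ v₂ u₃ v₃ u₄ v₄ : ℝ)
    (h12 : (u₁, v₁) ≠ (u₂, v₂)) (h13 : (u₁, v₁) ≠ (u₃, v₃)) (h14 : (u₁, v₁) ≠ (u₄, v₄))
    (h23 : (u₂, v₂) ≠ (u₃, v₃)) (h24 : (u₂, v₂) ≠ (u₄, v₄)) (h34 : (u₃, v₃) ≠ (u₄, v₄))
    (h₁a : u₁ ^ 2 + 2 * c * v₁ = s₁) (h₁b : v₁ ^ 2 + 2 * c * u₁ = s₂)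
    (h₂a : u₂ ^ 2 + 2 * c * v₂ = s₁) (h₂b : v₂ ^ 2 + 2 * c * u₂ = s₂)
    (h₃a : u₃ ^ 2 + 2 * c * v₃ = s₁) (h₃b : v₃ ^ 2 + 2 * c * u₃ = s₂)
    (h₄a : u₄ ^ 2 + 2 * c * v₄ = s₁) (h₄b : v₄ ^ 2 + 2 * c * u₄ = s₂)
    (hD₁ : 4 * (u₁ * v₁ - c ^ 2) ≠ 0) (hD₂ : 4 * (u₂ * v₂ - c ^ 2) ≠ 0)
    (hD₃ : 4 * (u₃ * v₃ - c ^ 2) ≠ 0) (hD₄ : 4 * (u₄ * v₄ - c ^ 2) ≠ 0) :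
    1 / (4 * (u₁ * v₁ - c ^ 2)) + 1 / (4 * (u₂ * v₂ - c ^ 2)) +
      1 / (4 * (u₃ * v₃ - c ^ 2)) + 1 / (4 * (u₄ * v₄ - c ^ 2)) = 0 := by
  by_cases hc : c = 0
  · subst hc
    simp only [mul_zero, zero_mul, add_zero, ne_eq, OfNat.ofNat_ne_zero, not_false_eq_true,
      zero_pow, sub_zero, mul_eq_zero, not_or, false_or] at *
    obtain ⟨hu, hv⟩ := hD₁
    have a2 := sq_eq_sq_iff_eq_or_eq_neg.1 (h₂a.trans h₁a.symm)
    have a3 := sq_eq_sq_iff_eq_or_eq_neg.1 (h₃a.trans h₁a.symm)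
    have a4 := sq_eq_sq_iff_eq_or_eq_neg.1 (h₄a.trans h₁a.symm)
    have b2 := sq_eq_sq_iff_eq_or_eq_neg.1 (h₂b.trans h₁b.symm)
    have b3 := sq_eq_sq_iff_eq_or_eq_neg.1 (h₃b.trans h₁b.symm)
    have b4 := sq_eq_sq_iff_eq_or_eq_neg.1 (h₄b.trans h₁b.symm)
    clear h₁a h₂a h₃a h₄a h₁b h₂b h₃b h₄b hD₂ hD₃ hD₄
    rcases a2 with rfl | rfl <;> rcases b2 with rfl | rfl <;>
    first
    | exact absurd rfl h12
    | (rcases a3 with rfl | rfl <;> rcases b3 with rfl | rfl <;>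
      first
      | exact absurd rfl h13
      | exact absurd rfl h23
      | (rcases a4 with rfl | rfl <;> rcases b4 with rfl | rfl <;>
        first
        | exact absurd rfl h14
        | exact absurd rfl h24
        | exact absurd rfl h34
        | (field_simp; ring)))
  · have N : ∀ x y x' y' : ℝ, (x, y) ≠ (x', y') → x ^ 2 + 2 * c * y = s₁ →
        x' ^ 2 + 2 * c * y' = s₁ → x ≠ x' := by
      intro x y x' y' h k k' hx
      subst hx
      apply h
      have : y = y' := by
        apply mul_left_cancel₀ (mul_ne_zero two_ne_zero hc)
        linarith
      rw [this]
    have n12 := N _ _ _ _ h12 h₁a h₂a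
    have n13 := N _ _ _ _ h13 h₁a h₃a
    have n14 := N _ _ _ _ h14 h₁a h₄a
    have n23 := N _ _ _ _ h23 h₂a h₃a
    have n24 := N _ _ _ _ h24 h₂a h₄a
    have n34 := N _ _ _ _ h34 h₃a h₄a
    have k1 := key c s₁ s₂ u₁ u₂ u₃ u₄ v₁ v₂ v₃ v₄ n12 n13 n14 n23 n24 n34
      h₁a h₁b h₂a h₂b h₃a h₃b h₄a h₄b
    have k2 := key c s₁ s₂ u₂ u₁ u₃ u₄ v₂ v₁ v₃ v₄ n12.symm n23 n24 n13 n14 n34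
      h₂a h₂b h₁a h₁b h₃a h₃b h₄a h₄b
    have k3 := key c s₁ s₂ u₃ u₁ u₂ u₄ v₃ v₁ v₂ v₄ n13.symm n23.symm n34 n12 n14 n24
      h₃a h₃b h₁a h₁b h₂a h₂b h₄a h₄b
    have k4 := key c s₁ s₂ u₄ u₁ u₂ u₃ v₄ v₁ v₂ v₃ n14.symm n24.symm n34.symm n12 n13 n23
      h₄a h₄b h₁a h₁b h₂a h₂b h₃a h₃b
    have F : ∀ D p : ℝ, -2 * c * D = p → 1 / D = -2 * c * (1 / p) := by
      intro D p h
      subst h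
      by_cases hD : D = 0
      · simp [hD]
      · field_simp
    rw [F _ _ k1, F _ _ k2, F _ _ k3, F _ _ k4]
    have m12 := sub_ne_zero.2 n12
    have m13 := sub_ne_zero.2 n13
    have m14 := sub_ne_zero.2 n14
    have m23 := sub_ne_zero.2 n23
    have m24 := sub_ne_zero.2 n24
    have m34 := sub_ne_zero.2 n34
    rw [← neg_sub u₁ u₂, ← neg_sub u₁ u₃, ← neg_sub u₂ u₃, ← neg_sub u₁ u₄,
      ← neg_sub u₂ u₄, ← neg_sub u₃ u₄]
    field_simp
    ring
end

section
/- Let c, s₁, s₂ ∈ ℝ. Suppose (u₁,v₁), (u₂,v₂), (u₃,v₃), (u₄,v₄) are four pairwise distinct points of ℝ² each satisfying 3v_i² − 3u_i² − 2cu_i = s₁ and 6u_iv_i − 2cv_i = s₂, and suppose D_i := 4c² − 36(u_i² + v_i²) ≠ 0 for each i. Then 1/D₁ + 1/D₂ + 1/D₃ + 1/D₄ = 0; that is, the total signed magnification of a source in the four-image region of the generic elliptic umbilic map is identically zero. -/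
lemma quartic_deriv_aux (p q r x y z t : ℂ) (hxy : x ≠ y) (hxz : x ≠ z) (hxt : x ≠ t)
    (hyz : y ≠ z) (hyt : y ≠ t) (hzt : z ≠ t)
    (hx : 27 * x ^ 4 + p * x ^ 2 + q * x + r = 0) (hy : 27 * y ^ 4 + p * y ^ 2 + q * y + r = 0)
    (hz : 27 * z ^ 4 + p * z ^ 2 + q * z + r = 0) (ht : 27 * t ^ 4 + p * t ^ 2 + q * t + r = 0) :
    108 * x ^ 3 + 2 * p * x + q = 27 * ((x - y) * (x - z) * (x - t)) := by
  have d2 : ∀ w, x ≠ w → 27 * w ^ 4 + p * w ^ 2 + q * w + r = 0 →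
      27 * (x ^ 3 + x ^ 2 * w + x * w ^ 2 + w ^ 3) + p * (x + w) + q = 0 := by
    intro w h hw
    apply mul_left_cancel₀ (sub_ne_zero.mpr h)
    linear_combination hx - hw
  have d3 : ∀ w, y ≠ w → x ≠ w → 27 * w ^ 4 + p * w ^ 2 + q * w + r = 0 →
      27 * (x ^ 2 + y ^ 2 + w ^ 2 + x * y + x * w + y * w) + p = 0 := by
    intro w h h' hw
    apply mul_left_cancel₀ (sub_ne_zero.mpr h)
    linear_combination d2 y hxy hy - d2 w h' hw
  have e1 : x + y + z + t = 0 := by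
    apply mul_left_cancel₀ (sub_ne_zero.mpr hzt)
    linear_combination (d3 z hyz hxz hz - d3 t hyt hxt ht) / 27
  have ht' : t = -(x + y + z) := by linear_combination e1
  have h2 := d2 y hxy hy
  have h3 := d3 z hyz hxz hz
  subst ht'
  linear_combination h2 + (x - y) * h3

lemma complex_rels (c s₁ s₂ u v : ℝ)
    (ha : 3 * v ^ 2 - 3 * u ^ 2 - 2 * c * u = s₁) (hb : 6 * u * v - 2 * c * v = s₂) :
    3 * (u + v * Complex.I) ^ 2 + 2 * c * (u - v * Complex.I) + (s₁ - s₂ * Complex.I) = 0 ∧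
    3 * (u - v * Complex.I) ^ 2 + 2 * c * (u + v * Complex.I) + (s₁ + s₂ * Complex.I) = 0 := by
  subst ha hb
  push_cast
  constructor
  · linear_combination (3 * (v:ℂ) ^ 2) * Complex.I_sq
  · linear_combination (3 * (v:ℂ) ^ 2) * Complex.I_sq

lemma quartic_of_rels (c a s z w : ℂ) (h1 : 3 * z ^ 2 + 2 * c * w + a = 0)
    (h2 : 3 * w ^ 2 + 2 * c * z + s = 0) :
    27 * z ^ 4 + 18 * a * z ^ 2 + 8 * c ^ 3 * z + (3 * a ^ 2 + 4 * c ^ 2 * s) = 0 := by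
  linear_combination 3 * (3 * z ^ 2 + a - 2 * c * w) * h1 + 4 * c ^ 2 * h2

lemma ne_of_pair (u v u' v' : ℝ) (h : (u, v) ≠ (u', v')) :
    (u + v * Complex.I : ℂ) ≠ u' + v' * Complex.I := by
  intro e
  apply h
  have h1 := congrArg Complex.re e
  have h2 := congrArg Complex.im e
  simp at h1 h2
  rw [h1, h2]

lemma deriv_rel (c u v : ℝ) (a : ℂ)
    (h : 3 * (u + v * Complex.I : ℂ) ^ 2 + 2 * c * (u - v * Complex.I) + a = 0) :
    108 * (u + v * Complex.I : ℂ) ^ 3 + 2 * (18 * a) * (u + v * Complex.I) + 8 * (c:ℂ) ^ 3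
      = 2 * c * (4 * c ^ 2 - 36 * (u ^ 2 + v ^ 2)) := by
  linear_combination 36 * (u + v * Complex.I : ℂ) * h + 72 * (c:ℂ) * v ^ 2 * Complex.I_sq

lemma lagrange_sum (x y z t A B C D : ℂ) (c : ℂ) (hc : c ≠ 0)
    (hxy : x ≠ y) (hxz : x ≠ z) (hxt : x ≠ t)
    (hyz : y ≠ z) (hyt : y ≠ t) (hzt : z ≠ t)
    (hA : 2 * c * A = 27 * ((x - y) * (x - z) * (x - t)))
    (hB : 2 * c * B = 27 * ((y - x) * (y - z) * (y - t)))
    (hC : 2 * c * C = 27 * ((z - x) * (z - y) * (z - t)))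
    (hD : 2 * c * D = 27 * ((t - x) * (t - y) * (t - z))) :
    1 / A + 1 / B + 1 / C + 1 / D = 0 := by
  have key : ∀ X Y : ℂ, 2 * c * X = 27 * Y → 1 / X = 2 * c / 27 * (1 / Y) := by
    intro X Y h
    have : X = 27 * Y / (2 * c) := by field_simp; linear_combination h
    rw [this]
    by_cases hY : Y = 0
    · simp [hY]
    · field_simp
  rw [key _ _ hA, key _ _ hB, key _ _ hC, key _ _ hD]
  have a1 := sub_ne_zero.mpr hxy
  have a2 := sub_ne_zero.mpr hxz
  have a3 := sub_ne_zero.mpr hxt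
  have a4 := sub_ne_zero.mpr hyz
  have a5 := sub_ne_zero.mpr hyt
  have a6 := sub_ne_zero.mpr hzt
  rw [← neg_sub x y, ← neg_sub x z, ← neg_sub x t, ← neg_sub y z, ← neg_sub y t, ← neg_sub z t]
  field_simp
  ring


/-- Generic elliptic umbilic magnification relation: the total signed magnification of a
source in the four-image region of the generic elliptic umbilic map
`f_c(u,v) = (3v² − 3u² − 2cu, 6uv − 2cv)` is identically zero. -/
theorem elliptic_umbilic_generic_magnification_relation
    (c s₁ s₂ u₁ v₁ u₂ v₂ u₃ v₃ u₄ v₄ : ℝ)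
    (h12 : (u₁, v₁) ≠ (u₂, v₂)) (h13 : (u₁, v₁) ≠ (u₃, v₃)) (h14 : (u₁, v₁) ≠ (u₄, v₄))
    (h23 : (u₂, v₂) ≠ (u₃, v₃)) (h24 : (u₂, v₂) ≠ (u₄, v₄)) (h34 : (u₃, v₃) ≠ (u₄, v₄))
    (h₁a : 3 * v₁ ^ 2 - 3 * u₁ ^ 2 - 2 * c * u₁ = s₁) (h₁b : 6 * u₁ * v₁ - 2 * c * v₁ = s₂)
    (h₂a : 3 * v₂ ^ 2 - 3 * u₂ ^ 2 - 2 * c * u₂ = s₁) (h₂b : 6 * u₂ * v₂ - 2 * c * v₂ = s₂)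
    (h₃a : 3 * v₃ ^ 2 - 3 * u₃ ^ 2 - 2 * c * u₃ = s₁) (h₃b : 6 * u₃ * v₃ - 2 * c * v₃ = s₂)
    (h₄a : 3 * v₄ ^ 2 - 3 * u₄ ^ 2 - 2 * c * u₄ = s₁) (h₄b : 6 * u₄ * v₄ - 2 * c * v₄ = s₂)
    (hD₁ : 4 * c ^ 2 - 36 * (u₁ ^ 2 + v₁ ^ 2) ≠ 0)
    (hD₂ : 4 * c ^ 2 - 36 * (u₂ ^ 2 + v₂ ^ 2) ≠ 0)
    (hD₃ : 4 * c ^ 2 - 36 * (u₃ ^ 2 + v₃ ^ 2) ≠ 0)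
    (hD₄ : 4 * c ^ 2 - 36 * (u₄ ^ 2 + v₄ ^ 2) ≠ 0) :
    1 / (4 * c ^ 2 - 36 * (u₁ ^ 2 + v₁ ^ 2)) + 1 / (4 * c ^ 2 - 36 * (u₂ ^ 2 + v₂ ^ 2)) +
      1 / (4 * c ^ 2 - 36 * (u₃ ^ 2 + v₃ ^ 2)) + 1 / (4 * c ^ 2 - 36 * (u₄ ^ 2 + v₄ ^ 2)) = 0 := by

  have n12 := ne_of_pair _ _ _ _ h12
  have n13 := ne_of_pair _ _ _ _ h13
  have n14 := ne_of_pair _ _ _ _ h14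
  have n23 := ne_of_pair _ _ _ _ h23
  have n24 := ne_of_pair _ _ _ _ h24
  have n34 := ne_of_pair _ _ _ _ h34
  obtain ⟨p1, q1⟩ := complex_rels _ _ _ _ _ h₁a h₁b
  obtain ⟨p2, q2⟩ := complex_rels _ _ _ _ _ h₂a h₂b
  obtain ⟨p3, q3⟩ := complex_rels _ _ _ _ _ h₃a h₃b
  obtain ⟨p4, q4⟩ := complex_rels _ _ _ _ _ h₄a h₄b
  by_cases hc : c = 0
  · exfalso
    subst hc
    have e12 : (u₁ + v₁ * Complex.I : ℂ) + (u₂ + v₂ * Complex.I) = 0 := by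
      apply mul_left_cancel₀ (sub_ne_zero.mpr n12)
      push_cast at p1 p2
      linear_combination (p1 - p2) / 3
    have e13 : (u₁ + v₁ * Complex.I : ℂ) + (u₃ + v₃ * Complex.I) = 0 := by
      apply mul_left_cancel₀ (sub_ne_zero.mpr n13)
      push_cast at p1 p3
      linear_combination (p1 - p3) / 3
    exact n23 (by linear_combination e12 - e13)
  have hc' : (c : ℂ) ≠ 0 := by exact_mod_cast hc
  have r1 := quartic_of_rels _ _ _ _ _ p1 q1
  have r2 := quartic_of_rels _ _ _ _ _ p2 q2
  have r3 := quartic_of_rels _ _ _ _ _ p3 q3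
  have r4 := quartic_of_rels _ _ _ _ _ p4 q4
  have H := lagrange_sum _ _ _ _ _ _ _ _ (c : ℂ) hc' n12 n13 n14 n23 n24 n34
    ((deriv_rel _ _ _ _ p1).symm.trans
      (quartic_deriv_aux _ _ _ _ _ _ _ n12 n13 n14 n23 n24 n34 r1 r2 r3 r4))
    ((deriv_rel _ _ _ _ p2).symm.trans
      (quartic_deriv_aux _ _ _ _ _ _ _ n12.symm n23 n24 n13 n14 n34 r2 r1 r3 r4))
    ((deriv_rel _ _ _ _ p3).symm.trans
      (quartic_deriv_aux _ _ _ _ _ _ _ n13.symm n23.symm n34 n12 n14 n24 r3 r1 r2 r4))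
    ((deriv_rel _ _ _ _ p4).symm.trans
      (quartic_deriv_aux _ _ _ _ _ _ _ n14.symm n24.symm n34.symm n12 n13 n23 r4 r1 r2 r3))
  exact_mod_cast H
end

section
/- Let c, s₁, s₂ ∈ ℝ. Suppose (u₁,v₁), (u₂,v₂), (u₃,v₃), (u₄,v₄) are four pairwise distinct points of ℝ² each satisfying −3u_i² − cv_i = s₁ and −3v_i² − cu_i = s₂, and suppose D_i := 36u_iv_i − c² ≠ 0 for each i. Then 1/D₁ + 1/D₂ + 1/D₃ + 1/D₄ = 0; that is, the total signed magnification of a source in the four-image region of the generic hyperbolic umbilic map is identically zero. -/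
/-- If `a, b, d, e` are distinct roots of the image quartic `27x⁴ + 18s x² + kx + m`, then its
derivative at `a` is given by the product of root differences. -/
theorem quartic_deriv_aux_s6 (s k m a b d e : ℝ) (hab : a ≠ b) (had : a ≠ d) (hae : a ≠ e)
    (hbd : b ≠ d) (hbe : b ≠ e) (hde : d ≠ e)
    (ha : 27 * a ^ 4 + 18 * s * a ^ 2 + k * a + m = 0)
    (hb : 27 * b ^ 4 + 18 * s * b ^ 2 + k * b + m = 0)
    (hd : 27 * d ^ 4 + 18 * s * d ^ 2 + k * d + m = 0)
    (he : 27 * e ^ 4 + 18 * s * e ^ 2 + k * e + m = 0) :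
    108 * a ^ 3 + 36 * s * a + k = 27 * ((a - b) * (a - d) * (a - e)) := by
  have q : ∀ y, a ≠ y → 27 * y ^ 4 + 18 * s * y ^ 2 + k * y + m = 0 →
      27 * (a ^ 3 + a ^ 2 * y + a * y ^ 2 + y ^ 3) + 18 * s * (a + y) + k = 0 := by
    intro y hy h
    apply mul_left_cancel₀ (sub_ne_zero.2 hy)
    linear_combination ha - h
  have qb := q b hab hb
  have r : ∀ y, a ≠ y → b ≠ y → 27 * y ^ 4 + 18 * s * y ^ 2 + k * y + m = 0 →
      27 * (a ^ 2 + b ^ 2 + y ^ 2 + a * b + a * y + b * y) + 18 * s = 0 := by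
    intro y hay hby h
    apply mul_left_cancel₀ (sub_ne_zero.2 hby)
    linear_combination qb - q y hay h
  have rd := r d had hbd hd
  have re := r e hae hbe he
  have h1 : a + b + d + e = 0 := by
    apply mul_left_cancel₀ (sub_ne_zero.2 hde)
    linear_combination (rd - re) / 27
  obtain rfl : e = -(a + b + d) := by linarith
  linear_combination qb + (a - b) * rd

/-- Generic hyperbolic umbilic magnification relation: the total signed magnification of a
source in the four-image region of the generic hyperbolic umbilic map
`f_c(u,v) = (−3u² − cv, −3v² − cu)` is identically zero. -/
theorem hyperbolic_umbilic_generic_magnification_relation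
    (c s₁ s₂ u₁ v₁ u₂ v₂ u₃ v₃ u₄ v₄ : ℝ)
    (h12 : (u₁, v₁) ≠ (u₂, v₂)) (h13 : (u₁, v₁) ≠ (u₃, v₃)) (h14 : (u₁, v₁) ≠ (u₄, v₄))
    (h23 : (u₂, v₂) ≠ (u₃, v₃)) (h24 : (u₂, v₂) ≠ (u₄, v₄)) (h34 : (u₃, v₃) ≠ (u₄, v₄))
    (h₁a : -3 * u₁ ^ 2 - c * v₁ = s₁) (h₁b : -3 * v₁ ^ 2 - c * u₁ = s₂)
    (h₂a : -3 * u₂ ^ 2 - c * v₂ = s₁) (h₂b : -3 * v₂ ^ 2 - c * u₂ = s₂)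
    (h₃a : -3 * u₃ ^ 2 - c * v₃ = s₁) (h₃b : -3 * v₃ ^ 2 - c * u₃ = s₂)
    (h₄a : -3 * u₄ ^ 2 - c * v₄ = s₁) (h₄b : -3 * v₄ ^ 2 - c * u₄ = s₂)
    (hD₁ : 36 * u₁ * v₁ - c ^ 2 ≠ 0) (hD₂ : 36 * u₂ * v₂ - c ^ 2 ≠ 0)
    (hD₃ : 36 * u₃ * v₃ - c ^ 2 ≠ 0) (hD₄ : 36 * u₄ * v₄ - c ^ 2 ≠ 0) :
    1 / (36 * u₁ * v₁ - c ^ 2) + 1 / (36 * u₂ * v₂ - c ^ 2) +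
      1 / (36 * u₃ * v₃ - c ^ 2) + 1 / (36 * u₄ * v₄ - c ^ 2) = 0 := by
  by_cases hc : c = 0
  · subst hc
    have hu1 : u₁ ≠ 0 := by rintro rfl; simp at hD₁
    have hv1 : v₁ ≠ 0 := by rintro rfl; simp at hD₁
    have e2 : u₂ = u₁ ∨ u₂ = -u₁ := sq_eq_sq_iff_eq_or_eq_neg.1 (by linarith)
    have e3 : u₃ = u₁ ∨ u₃ = -u₁ := sq_eq_sq_iff_eq_or_eq_neg.1 (by linarith)
    have e4 : u₄ = u₁ ∨ u₄ = -u₁ := sq_eq_sq_iff_eq_or_eq_neg.1 (by linarith)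
    have f2 : v₂ = v₁ ∨ v₂ = -v₁ := sq_eq_sq_iff_eq_or_eq_neg.1 (by linarith)
    have f3 : v₃ = v₁ ∨ v₃ = -v₁ := sq_eq_sq_iff_eq_or_eq_neg.1 (by linarith)
    have f4 : v₄ = v₁ ∨ v₄ = -v₁ := sq_eq_sq_iff_eq_or_eq_neg.1 (by linarith)
    clear h₁a h₁b h₂a h₂b h₃a h₃b h₄a h₄b hD₁ hD₂ hD₃ hD₄
    rcases e2 with rfl | rfl <;> rcases f2 with rfl | rfl <;>
    rcases e3 with rfl | rfl <;> rcases f3 with rfl | rfl <;>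
    rcases e4 with rfl | rfl <;> rcases f4 with rfl | rfl <;>
    first
      | exact absurd rfl h12
      | exact absurd rfl h13
      | exact absurd rfl h14
      | exact absurd rfl h23
      | exact absurd rfl h24
      | exact absurd rfl h34
      | (simp only [mul_neg, neg_mul, neg_neg, ne_eq, OfNat.ofNat_ne_zero, not_false_eq_true,
          zero_pow, sub_zero, div_neg]; ring)
  · have hne : ∀ x y z w : ℝ, (x, y) ≠ (z, w) → -3 * x ^ 2 - c * y = s₁ →
        -3 * z ^ 2 - c * w = s₁ → x ≠ z := by
      rintro x y z w h h1 h2 rfl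
      apply h
      have : y = w := mul_left_cancel₀ hc (by linarith)
      rw [this]
    have n12 := hne _ _ _ _ h12 h₁a h₂a
    have n13 := hne _ _ _ _ h13 h₁a h₃a
    have n14 := hne _ _ _ _ h14 h₁a h₄a
    have n23 := hne _ _ _ _ h23 h₂a h₃a
    have n24 := hne _ _ _ _ h24 h₂a h₄a
    have n34 := hne _ _ _ _ h34 h₃a h₄a
    have hP : ∀ x y : ℝ, -3 * x ^ 2 - c * y = s₁ → -3 * y ^ 2 - c * x = s₂ →
        27 * x ^ 4 + 18 * s₁ * x ^ 2 + c ^ 3 * x + (3 * s₁ ^ 2 + c ^ 2 * s₂) = 0 := by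
      rintro x y rfl rfl
      ring
    have p1 := hP _ _ h₁a h₁b
    have p2 := hP _ _ h₂a h₂b
    have p3 := hP _ _ h₃a h₃b
    have p4 := hP _ _ h₄a h₄b
    have hD : ∀ x y p : ℝ, -3 * x ^ 2 - c * y = s₁ →
        108 * x ^ 3 + 36 * s₁ * x + c ^ 3 = 27 * p →
        36 * x * y - c ^ 2 = -(27 * p) / c := by
      rintro x y p rfl h
      rw [← h]
      field_simp
      ring
    rw [hD _ _ _ h₁a (quartic_deriv_aux_s6 _ _ _ _ _ _ _ n12 n13 n14 n23 n24 n34 p1 p2 p3 p4),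
      hD _ _ _ h₂a (quartic_deriv_aux_s6 _ _ _ _ _ _ _ n12.symm n23 n24 n13 n14 n34 p2 p1 p3 p4),
      hD _ _ _ h₃a (quartic_deriv_aux_s6 _ _ _ _ _ _ _ n13.symm n23.symm n34 n12 n14 n24
        p3 p1 p2 p4),
      hD _ _ _ h₄a (quartic_deriv_aux_s6 _ _ _ _ _ _ _ n14.symm n24.symm n34.symm n12 n13 n23
        p4 p1 p2 p3),
      ← neg_sub u₁ u₂, ← neg_sub u₁ u₃, ← neg_sub u₁ u₄, ← neg_sub u₂ u₃, ← neg_sub u₂ u₄,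
      ← neg_sub u₃ u₄]
    have m12 := sub_ne_zero.2 n12
    have m13 := sub_ne_zero.2 n13
    have m14 := sub_ne_zero.2 n14
    have m23 := sub_ne_zero.2 n23
    have m24 := sub_ne_zero.2 n24
    have m34 := sub_ne_zero.2 n34
    field_simp
    ring
end

section
/- Let c, s₁, s₂ ∈ ℝ. Suppose (u₁,v₁), (u₂,v₂), (u₃,v₃), (u₄,v₄) are four pairwise distinct points of ℝ² each satisfying u_iv_i + cu_i² + u_i⁴ = s₁ and v_i = s₂, and suppose D_i := v_i + 2cu_i + 4u_i³ ≠ 0 for each i. Then 1/D₁ + 1/D₂ + 1/D₃ + 1/D₄ = 0; that is, the total signed magnification of a source in the four-image region of the generic swallowtail map is identically zero. -/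
/-- Generic swallowtail magnification relation: the total signed magnification of a
source in the four-image region of the generic swallowtail map
`f_c(u,v) = (uv + cu² + u⁴, v)` is identically zero. -/
theorem swallowtail_generic_magnification_relation
    (c s₁ s₂ u₁ v₁ u₂ v₂ u₃ v₃ u₄ v₄ : ℝ)
    (h12 : (u₁, v₁) ≠ (u₂, v₂)) (h13 : (u₁, v₁) ≠ (u₃, v₃)) (h14 : (u₁, v₁) ≠ (u₄, v₄))
    (h23 : (u₂, v₂) ≠ (u₃, v₃)) (h24 : (u₂, v₂) ≠ (u₄, v₄)) (h34 : (u₃, v₃) ≠ (u₄, v₄))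
    (h₁a : u₁ * v₁ + c * u₁ ^ 2 + u₁ ^ 4 = s₁) (h₁b : v₁ = s₂)
    (h₂a : u₂ * v₂ + c * u₂ ^ 2 + u₂ ^ 4 = s₁) (h₂b : v₂ = s₂)
    (h₃a : u₃ * v₃ + c * u₃ ^ 2 + u₃ ^ 4 = s₁) (h₃b : v₃ = s₂)
    (h₄a : u₄ * v₄ + c * u₄ ^ 2 + u₄ ^ 4 = s₁) (h₄b : v₄ = s₂)
    (hD₁ : v₁ + 2 * c * u₁ + 4 * u₁ ^ 3 ≠ 0) (hD₂ : v₂ + 2 * c * u₂ + 4 * u₂ ^ 3 ≠ 0)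
    (hD₃ : v₃ + 2 * c * u₃ + 4 * u₃ ^ 3 ≠ 0) (hD₄ : v₄ + 2 * c * u₄ + 4 * u₄ ^ 3 ≠ 0) :
    1 / (v₁ + 2 * c * u₁ + 4 * u₁ ^ 3) + 1 / (v₂ + 2 * c * u₂ + 4 * u₂ ^ 3) +
      1 / (v₃ + 2 * c * u₃ + 4 * u₃ ^ 3) + 1 / (v₄ + 2 * c * u₄ + 4 * u₄ ^ 3) = 0 := by
  subst v₁ v₂ v₃ v₄
  have n12 : u₁ - u₂ ≠ 0 := fun h => h12 (by rw [sub_eq_zero.mp h])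
  have n13 : u₁ - u₃ ≠ 0 := fun h => h13 (by rw [sub_eq_zero.mp h])
  have n14 : u₁ - u₄ ≠ 0 := fun h => h14 (by rw [sub_eq_zero.mp h])
  have n23 : u₂ - u₃ ≠ 0 := fun h => h23 (by rw [sub_eq_zero.mp h])
  have n24 : u₂ - u₄ ≠ 0 := fun h => h24 (by rw [sub_eq_zero.mp h])
  have n34 : u₃ - u₄ ≠ 0 := fun h => h34 (by rw [sub_eq_zero.mp h])
  -- first divided differences
  have e12 : s₂ + c * (u₁ + u₂) + (u₁ ^ 3 + u₁ ^ 2 * u₂ + u₁ * u₂ ^ 2 + u₂ ^ 3) = 0 :=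
    mul_left_cancel₀ n12 (by linear_combination h₁a - h₂a)
  have e13 : s₂ + c * (u₁ + u₃) + (u₁ ^ 3 + u₁ ^ 2 * u₃ + u₁ * u₃ ^ 2 + u₃ ^ 3) = 0 :=
    mul_left_cancel₀ n13 (by linear_combination h₁a - h₃a)
  have e14 : s₂ + c * (u₁ + u₄) + (u₁ ^ 3 + u₁ ^ 2 * u₄ + u₁ * u₄ ^ 2 + u₄ ^ 3) = 0 :=
    mul_left_cancel₀ n14 (by linear_combination h₁a - h₄a)
  -- second divided differences
  have e123 : c + (u₁ ^ 2 + u₂ ^ 2 + u₃ ^ 2 + u₁ * u₂ + u₁ * u₃ + u₂ * u₃) = 0 :=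
    mul_left_cancel₀ n23 (by linear_combination e12 - e13)
  have e124 : c + (u₁ ^ 2 + u₂ ^ 2 + u₄ ^ 2 + u₁ * u₂ + u₁ * u₄ + u₂ * u₄) = 0 :=
    mul_left_cancel₀ n24 (by linear_combination e12 - e14)
  -- third divided difference
  have e : u₁ + u₂ + u₃ + u₄ = 0 :=
    mul_left_cancel₀ n34 (by linear_combination e123 - e124)
  have hu : u₄ = -(u₁ + u₂ + u₃) := by linear_combination e
  have hc : c = -(u₁ ^ 2 + u₂ ^ 2 + u₃ ^ 2 + u₁ * u₂ + u₁ * u₃ + u₂ * u₃) := by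
    linear_combination e123
  have hs : s₂ = -(c * (u₁ + u₂) + (u₁ ^ 3 + u₁ ^ 2 * u₂ + u₁ * u₂ ^ 2 + u₂ ^ 3)) := by
    linear_combination e12
  have d1 : s₂ + 2 * c * u₁ + 4 * u₁ ^ 3 = (u₁ - u₂) * (u₁ - u₃) * (u₁ - u₄) := by
    rw [hs, hc, hu]; ring
  have d2 : s₂ + 2 * c * u₂ + 4 * u₂ ^ 3 = -((u₁ - u₂) * (u₂ - u₃) * (u₂ - u₄)) := by
    rw [hs, hc, hu]; ring
  have d3 : s₂ + 2 * c * u₃ + 4 * u₃ ^ 3 = (u₁ - u₃) * (u₂ - u₃) * (u₃ - u₄) := by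
    rw [hs, hc, hu]; ring
  have d4 : s₂ + 2 * c * u₄ + 4 * u₄ ^ 3 = -((u₁ - u₄) * (u₂ - u₄) * (u₃ - u₄)) := by
    rw [hs, hc, hu]; ring
  rw [d1, d2, d3, d4]
  field_simp
  ring
end

section
/- Let c, s₁ ∈ ℝ with c ≠ 0 and 0 < s₁ < 4c². Then the set of solutions (u,v) ∈ ℝ² of η_c(u,v) = (s₁, 0) is exactly the four points (√s₁, 0), (−√s₁, 0), (2c, √(4c² − s₁)), (2c, −√(4c² − s₁)), and the sum of the reciprocals of the Jacobian determinant 8cu − 4(u² + v²) over these four points is zero. -/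
/-- For a source `(s₁, 0)` with `0 < s₁ < 4c²` on the axis inside the caustic of the
elliptic umbilic lensing map `η_c(u,v) = (u² − v², −2uv + 4cv)`, the solution set of the
lens equation is exactly the four stated points, and the sum of the signed magnifications
(reciprocals of the Jacobian determinant `8cu − 4(u² + v²)`) over these points is zero. -/
theorem elliptic_umbilic_axis_images (c s₁ : ℝ) (hc : c ≠ 0)
    (h0 : 0 < s₁) (h4 : s₁ < 4 * c ^ 2) :
    ({p : ℝ × ℝ | p.1 ^ 2 - p.2 ^ 2 = s₁ ∧ -2 * p.1 * p.2 + 4 * c * p.2 = 0} =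
      {(Real.sqrt s₁, 0), (-Real.sqrt s₁, 0),
        (2 * c, Real.sqrt (4 * c ^ 2 - s₁)), (2 * c, -Real.sqrt (4 * c ^ 2 - s₁))}) ∧
    1 / (8 * c * Real.sqrt s₁ - 4 * ((Real.sqrt s₁) ^ 2 + (0 : ℝ) ^ 2)) +
      1 / (8 * c * (-Real.sqrt s₁) - 4 * ((-Real.sqrt s₁) ^ 2 + (0 : ℝ) ^ 2)) +
      1 / (8 * c * (2 * c) - 4 * ((2 * c) ^ 2 + (Real.sqrt (4 * c ^ 2 - s₁)) ^ 2)) +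
      1 / (8 * c * (2 * c) - 4 * ((2 * c) ^ 2 + (-Real.sqrt (4 * c ^ 2 - s₁)) ^ 2)) = 0 := by
  have hr2 : Real.sqrt s₁ ^ 2 = s₁ := Real.sq_sqrt h0.le
  have hw2 : Real.sqrt (4 * c ^ 2 - s₁) ^ 2 = 4 * c ^ 2 - s₁ := Real.sq_sqrt (by linarith)
  have hr : 0 < Real.sqrt s₁ := Real.sqrt_pos.2 h0
  generalize Real.sqrt s₁ = r at *
  generalize Real.sqrt (4 * c ^ 2 - s₁) = w at *
  subst hr2
  constructor
  · ext ⟨u, v⟩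
    simp only [Set.mem_setOf_eq, Set.mem_insert_iff, Set.mem_singleton_iff, Prod.mk.injEq]
    constructor
    · rintro ⟨h1, h2⟩
      have h3 : v * (u - 2 * c) = 0 := by linarith
      rcases mul_eq_zero.1 h3 with hv | hu
      · subst hv
        have : u ^ 2 = r ^ 2 := by linarith
        rcases sq_eq_sq_iff_eq_or_eq_neg.1 this with h | h <;> simp [h]
      · have hu' : u = 2 * c := by linarith
        subst hu'
        have : v ^ 2 = w ^ 2 := by linarith
        rcases sq_eq_sq_iff_eq_or_eq_neg.1 this with h | h <;> simp [h]
    · rintro (⟨rfl, rfl⟩ | ⟨rfl, rfl⟩ | ⟨rfl, rfl⟩ | ⟨rfl, rfl⟩) <;>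
        constructor <;> linarith
  · have hp : (2 * c - r) * (2 * c + r) ≠ 0 := by
      intro h
      linarith
    have ha := left_ne_zero_of_mul hp
    have hb := right_ne_zero_of_mul hp
    have hr0 := hr.ne'
    have e1 : 8 * c * r - 4 * (r ^ 2 + (0 : ℝ) ^ 2) = 4 * r * (2 * c - r) := by ring
    have e2 : 8 * c * (-r) - 4 * ((-r) ^ 2 + (0 : ℝ) ^ 2) = -(4 * r * (2 * c + r)) := by ring
    have e3 : 8 * c * (2 * c) - 4 * ((2 * c) ^ 2 + w ^ 2)
        = -(4 * ((2 * c - r) * (2 * c + r))) := by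
      rw [hw2]; ring
    have e4 : 8 * c * (2 * c) - 4 * ((2 * c) ^ 2 + (-w) ^ 2)
        = -(4 * ((2 * c - r) * (2 * c + r))) := by
      rw [neg_sq, hw2]; ring
    rw [e1, e2, e3, e4]
    field_simp
    ring
end

section
/- Let c, s₁ ∈ ℝ with c > 0 and −c² < s₁ < c²/3. Then the set of solutions (u,v) ∈ ℝ² of f_c(u,v) = (s₁, 0) is exactly the four points ((−c + √(c² − 3s₁))/3, 0), ((−c − √(c² − 3s₁))/3, 0), (c/3, √((c² + s₁)/3)), (c/3, −√((c² + s₁)/3)), and the sum of the reciprocals of the Jacobian determinant 4c² − 36(u² + v²) over these four points is zero. -/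
/-- For a source `(s₁, 0)` with `c > 0` and `−c² < s₁ < c²/3` inside the caustic of the
generic elliptic umbilic map `f_c(u,v) = (3v² − 3u² − 2cu, 6uv − 2cv)`, the solution set
of `f_c(u,v) = (s₁,0)` is exactly the four stated points, and the sum of the reciprocals
of the Jacobian determinant `4c² − 36(u² + v²)` over these points is zero. -/
theorem elliptic_umbilic_generic_axis_images (c s₁ : ℝ) (hc : 0 < c)
    (hlo : -c ^ 2 < s₁) (hhi : s₁ < c ^ 2 / 3) :
    ({p : ℝ × ℝ | 3 * p.2 ^ 2 - 3 * p.1 ^ 2 - 2 * c * p.1 = s₁ ∧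
        6 * p.1 * p.2 - 2 * c * p.2 = 0} =
      {((-c + Real.sqrt (c ^ 2 - 3 * s₁)) / 3, 0), ((-c - Real.sqrt (c ^ 2 - 3 * s₁)) / 3, 0),
        (c / 3, Real.sqrt ((c ^ 2 + s₁) / 3)), (c / 3, -Real.sqrt ((c ^ 2 + s₁) / 3))}) ∧
    1 / (4 * c ^ 2 - 36 * (((-c + Real.sqrt (c ^ 2 - 3 * s₁)) / 3) ^ 2 + (0 : ℝ) ^ 2)) +
      1 / (4 * c ^ 2 - 36 * (((-c - Real.sqrt (c ^ 2 - 3 * s₁)) / 3) ^ 2 + (0 : ℝ) ^ 2)) +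
      1 / (4 * c ^ 2 - 36 * ((c / 3) ^ 2 + (Real.sqrt ((c ^ 2 + s₁) / 3)) ^ 2)) +
      1 / (4 * c ^ 2 - 36 * ((c / 3) ^ 2 + (-Real.sqrt ((c ^ 2 + s₁) / 3)) ^ 2)) = 0 := by
  have hr2 : Real.sqrt (c ^ 2 - 3 * s₁) ^ 2 = c ^ 2 - 3 * s₁ := Real.sq_sqrt (by linarith)
  have hr : 0 < Real.sqrt (c ^ 2 - 3 * s₁) := Real.sqrt_pos.mpr (by linarith)
  have ht2 : Real.sqrt ((c ^ 2 + s₁) / 3) ^ 2 = (c ^ 2 + s₁) / 3 := Real.sq_sqrt (by linarith)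
  generalize Real.sqrt (c ^ 2 - 3 * s₁) = r at *
  generalize Real.sqrt ((c ^ 2 + s₁) / 3) = t at *
  constructor
  · ext ⟨u, v⟩
    simp only [Set.mem_setOf_eq, Set.mem_insert_iff, Set.mem_singleton_iff, Prod.mk.injEq]
    constructor
    · rintro ⟨h1, h2⟩
      have h3 : v * (u - c / 3) = 0 := by linarith
      rcases mul_eq_zero.mp h3 with hv | hu
      · subst hv
        have h4 : (u - (-c + r) / 3) * (u - (-c - r) / 3) = 0 := by
          linear_combination (-1 / 3) * h1 - (1 / 9) * hr2
        rcases mul_eq_zero.mp h4 with h | h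
        · left; exact ⟨by linarith, rfl⟩
        · right; left; exact ⟨by linarith, rfl⟩
      · have hu' : u = c / 3 := by linarith
        subst hu'
        have h4 : (v - t) * (v + t) = 0 := by
          linear_combination (1 / 3) * h1 - ht2
        rcases mul_eq_zero.mp h4 with h | h
        · right; right; left; exact ⟨rfl, by linarith⟩
        · right; right; right; exact ⟨rfl, by linarith⟩
    · rintro (⟨rfl, rfl⟩ | ⟨rfl, rfl⟩ | ⟨rfl, rfl⟩ | ⟨rfl, rfl⟩)
      · constructor
        · linear_combination (-1 / 3) * hr2
        · ring
      · constructor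
        · linear_combination (-1 / 3) * hr2
        · ring
      · constructor
        · linear_combination 3 * ht2
        · ring
      · constructor
        · linear_combination 3 * ht2
        · ring
  · have hs : s₁ = (c ^ 2 - r ^ 2) / 3 := by linarith
    have hlt : r < 2 * c := by nlinarith
    have ha : 2 * c - r ≠ 0 := by linarith
    have hb : 2 * c + r ≠ 0 := by positivity
    have e1 : 4 * c ^ 2 - 36 * (((-c + r) / 3) ^ 2 + (0 : ℝ) ^ 2) = 4 * r * (2 * c - r) := by ring
    have e2 : 4 * c ^ 2 - 36 * (((-c - r) / 3) ^ 2 + (0 : ℝ) ^ 2) = -(4 * r * (2 * c + r)) := by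
      ring
    have e3 : 4 * c ^ 2 - 36 * ((c / 3) ^ 2 + t ^ 2) = -(4 * (2 * c - r) * (2 * c + r)) := by
      rw [ht2, hs]; ring
    have e4 : 4 * c ^ 2 - 36 * ((c / 3) ^ 2 + (-t) ^ 2) = -(4 * (2 * c - r) * (2 * c + r)) := by
      rw [neg_sq, e3]
    rw [e1, e2, e3, e4]
    have hr0 := hr.ne'
    field_simp
    ring
end

section
/- Let c, s₁, s₂ ∈ ℝ with s₂ ≠ 0, and let (u,v) ∈ ℝ². Then (u,v) satisfies u² − v² = s₁ and −2uv + 4cv = s₂ if and only if v ≠ 0, u = (−s₂ + 4cv)/(2v), and v is a root of the quartic v⁴ + (s₁ − 4c²)v² + 2cs₂·v − s₂²/4 = 0. In particular, the images of a source (s₁,s₂) with s₂ ≠ 0 under the elliptic umbilic lensing map correspond bijectively to the real roots of this quartic. -/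
/-- Elimination of `u` in the elliptic umbilic lens equation: for `s₂ ≠ 0`, a point
`(u,v)` is an image of the source `(s₁,s₂)` under `η_c(u,v) = (u² − v², −2uv + 4cv)`
iff `v ≠ 0`, `u = (−s₂ + 4cv)/(2v)`, and `v` is a root of the quartic
`v⁴ + (s₁ − 4c²)v² + 2cs₂·v − s₂²/4 = 0`.  In particular, the images correspond
bijectively (via `(u,v) ↦ v`) to the real roots of this quartic. -/
theorem elliptic_umbilic_image_quartic (c s₁ s₂ : ℝ) (hs₂ : s₂ ≠ 0) :
    (∀ u v : ℝ,
      (u ^ 2 - v ^ 2 = s₁ ∧ -2 * u * v + 4 * c * v = s₂) ↔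
        (v ≠ 0 ∧ u = (-s₂ + 4 * c * v) / (2 * v) ∧
          v ^ 4 + (s₁ - 4 * c ^ 2) * v ^ 2 + 2 * c * s₂ * v - s₂ ^ 2 / 4 = 0)) ∧
    Set.BijOn (fun p : ℝ × ℝ => p.2)
      {p : ℝ × ℝ | p.1 ^ 2 - p.2 ^ 2 = s₁ ∧ -2 * p.1 * p.2 + 4 * c * p.2 = s₂}
      {v : ℝ | v ^ 4 + (s₁ - 4 * c ^ 2) * v ^ 2 + 2 * c * s₂ * v - s₂ ^ 2 / 4 = 0} := by
  have key : ∀ u v : ℝ,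
      (u ^ 2 - v ^ 2 = s₁ ∧ -2 * u * v + 4 * c * v = s₂) ↔
        (v ≠ 0 ∧ u = (-s₂ + 4 * c * v) / (2 * v) ∧
          v ^ 4 + (s₁ - 4 * c ^ 2) * v ^ 2 + 2 * c * s₂ * v - s₂ ^ 2 / 4 = 0) := by
    intro u v
    constructor
    · rintro ⟨h1, h2⟩
      have hv : v ≠ 0 := by
        rintro rfl
        apply hs₂
        rw [← h2]
        ring
      refine ⟨hv, ?_, ?_⟩
      · rw [eq_div_iff (mul_ne_zero two_ne_zero hv)]
        linarith
      · rw [← h1, ← h2]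
        ring
    · rintro ⟨hv, hu, hq⟩
      rw [eq_div_iff (mul_ne_zero two_ne_zero hv)] at hu
      have h2 : -2 * u * v + 4 * c * v = s₂ := by linarith
      refine ⟨?_, h2⟩
      rw [← h2] at hq
      have h3 : v ^ 2 * (u ^ 2 - v ^ 2 - s₁) = 0 := by linear_combination -hq
      rcases mul_eq_zero.mp h3 with h | h
      · exact absurd h (pow_ne_zero 2 hv)
      · linarith
  refine ⟨key, ?_, ?_, ?_⟩
  · rintro ⟨u, v⟩ h
    exact ((key u v).mp h).2.2
  · rintro ⟨u, v⟩ h ⟨u', v'⟩ h' hvv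
    have e : v = v' := hvv
    subst e
    have e1 := ((key u v).mp h).2.1
    have e2 := ((key u' v).mp h').2.1
    rw [e1, e2]
  · intro v hq
    have hv : v ≠ 0 := by
      rintro rfl
      have hq' : (0:ℝ) ^ 4 + (s₁ - 4 * c ^ 2) * 0 ^ 2 + 2 * c * s₂ * 0 - s₂ ^ 2 / 4 = 0 := hq
      have : s₂ ^ 2 = 0 := by linarith
      exact hs₂ (pow_eq_zero_iff two_ne_zero |>.mp this)
    exact ⟨((-s₂ + 4 * c * v) / (2 * v), v), (key _ v).mpr ⟨hv, rfl, hq⟩, rfl⟩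
end
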